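/- For every real B and every complex-valued Schwartz function f on ℝ, the identity ‖−f'' + B²x²f‖² = ‖f''‖² + B⁴‖x²f‖² + 2B²‖x f'‖² − 2B²‖f‖² holds, where x²f denotes the function x ↦ x²f(x), x f' denotes x ↦ x·f'(x), and f'' is the second derivative of f. -/

import Mathlib

open MeasureTheory

/-!
Expanding the square gives `‖-f'' + V f‖² = ‖f''‖² + ‖V f‖² - 2 ∫ V Re⟨f, f''⟩` for any potential
`V` of temperate growth. Integrating by parts, `∫ V Re⟨f, f''⟩ = -∫ V ‖f'‖² - ∫ V' Re⟨f, f'⟩`;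
since `2 Re⟨f, f'⟩` is the derivative of `‖f‖²`, a second integration by parts turns the last term
into `½ ∫ V'' ‖f‖²`. For `V = B² x²` the second derivative is the constant `2 B²`.
-/

open scoped SchwartzMap RealInnerProductSpace
open SchwartzMap Function

lemma hasTemperateGrowth_deriv {F : Type*} [NormedAddCommGroup F] [NormedSpace ℝ F] {w : ℝ → F}
    (hw : w.HasTemperateGrowth) : (deriv w).HasTemperateGrowth := by
  refine ⟨(contDiff_infty_iff_deriv.mp hw.1).2, fun n ↦ ?_⟩
  simpa only [norm_iteratedFDeriv_eq_norm_iteratedDeriv, iteratedDeriv_succ'] using hw.2 (n + 1)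

lemma toReal_eLpNorm_two_sq {α F : Type*} [MeasurableSpace α] {μ : Measure α}
    [NormedAddCommGroup F] {u : α → F} (hu : AEStronglyMeasurable u μ) :
    (eLpNorm u 2 μ).toReal ^ 2 = ∫ x, ‖u x‖ ^ 2 ∂μ := by
  rw [toReal_eLpNorm hu, lpNorm_eq_integral_norm_rpow_toReal two_ne_zero ENNReal.ofNat_ne_top hu]
  simp only [ENNReal.toReal_ofNat, Real.rpow_ofNat, ← one_div, ← Real.sqrt_eq_rpow]
  exact Real.sq_sqrt (integral_nonneg fun x ↦ sq_nonneg _)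

variable {E : Type*} [NormedAddCommGroup E] [InnerProductSpace ℝ E]

lemma integrable_mul_inner_schwartzMap {D : Type*} [NormedAddCommGroup D] [NormedSpace ℝ D]
    [MeasurableSpace D] [BorelSpace D] [SecondCountableTopology D] {μ : Measure D}
    [μ.HasTemperateGrowth] {w : D → ℝ} (hw : w.HasTemperateGrowth) (f g : 𝓢(D, E)) :
    Integrable (fun x ↦ w x * ⟪f x, g x⟫) μ := by
  have hintegrable : Integrable (fun x ↦ ⟪smulLeftCLM E w f x, g x⟫) μ :=
    (pairing (innerSL ℝ) (smulLeftCLM E w f) g).integrable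
  simpa only [smulLeftCLM_apply hw, real_inner_smul_left] using hintegrable

section Weighted

variable {w : ℝ → ℝ} (hw : w.HasTemperateGrowth)

include hw

lemma integral_mul_inner_deriv (f g : 𝓢(ℝ, E)) :
    ∫ x, w x * ⟪f x, deriv g x⟫ =
      -(∫ x, deriv w x * ⟪f x, g x⟫) - ∫ x, w x * ⟪deriv f x, g x⟫ := by
  have hderiv (x : ℝ) : deriv (fun y ↦ w y • f y) x = w x • deriv f x + deriv w x • f x :=
    deriv_fun_smul (hw.1.differentiable (by simp) x) f.differentiableAt
  have hparts : ∫ x, ⟪smulLeftCLM E w f x, deriv g x⟫ =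
      -∫ x, ⟪deriv (smulLeftCLM E w f) x, g x⟫ :=
    integral_bilinear_deriv_right_eq_neg_left (smulLeftCLM E w f) g (innerSL ℝ)
  simp only [smulLeftCLM_apply hw, hderiv, inner_add_left, real_inner_smul_left] at hparts
  have hintegrable : Integrable fun x ↦ w x * ⟪deriv f x, g x⟫ :=
    integrable_mul_inner_schwartzMap hw (derivCLM ℝ E f) g
  rw [hparts,
    integral_add hintegrable (integrable_mul_inner_schwartzMap (hasTemperateGrowth_deriv hw) f g)]
  ring

lemma two_mul_integral_mul_inner_deriv_self (f : 𝓢(ℝ, E)) :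
    2 * ∫ x, w x * ⟪f x, deriv f x⟫ = -∫ x, deriv w x * ‖f x‖ ^ 2 := by
  have hparts := integral_mul_inner_deriv hw f f
  simp only [real_inner_self_eq_norm_sq, real_inner_comm (f _) (deriv f _)] at hparts
  linarith

lemma two_mul_integral_mul_inner_deriv_deriv_self (f : 𝓢(ℝ, E)) :
    2 * ∫ x, w x * ⟪f x, deriv (deriv f) x⟫ =
      (∫ x, deriv (deriv w) x * ‖f x‖ ^ 2) - 2 * ∫ x, w x * ‖deriv f x‖ ^ 2 := by
  have hparts : ∫ x, w x * ⟪f x, deriv (deriv f) x⟫ =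
      -(∫ x, deriv w x * ⟪f x, deriv f x⟫) - ∫ x, w x * ‖deriv f x‖ ^ 2 := by
    simp only [← real_inner_self_eq_norm_sq]
    exact integral_mul_inner_deriv hw f (derivCLM ℝ E f)
  linarith [two_mul_integral_mul_inner_deriv_self (hasTemperateGrowth_deriv hw) f]

lemma integral_norm_neg_deriv_deriv_add_smul_sq (f : 𝓢(ℝ, E)) :
    ∫ x, ‖-deriv (deriv f) x + w x • f x‖ ^ 2 =
      (∫ x, ‖deriv (deriv f) x‖ ^ 2) + (∫ x, ‖w x • f x‖ ^ 2) +
        2 * (∫ x, w x * ‖deriv f x‖ ^ 2) - ∫ x, deriv (deriv w) x * ‖f x‖ ^ 2 := by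
  have hexpand (x : ℝ) : ‖-deriv (deriv f) x + w x • f x‖ ^ 2 =
      ‖deriv (deriv f) x‖ ^ 2 + ‖w x • f x‖ ^ 2 - 2 * (w x * ⟪f x, deriv (deriv f) x⟫) := by
    rw [neg_add_eq_sub, norm_sub_sq_real, real_inner_smul_left]
    ring
  have hintegrable (u : 𝓢(ℝ, E)) : Integrable fun x ↦ ‖u x‖ ^ 2 :=
    (u.memLp 2).integrable_norm_pow two_ne_zero
  have hintegrable_deriv : Integrable fun x ↦ ‖deriv (deriv f) x‖ ^ 2 :=
    hintegrable (derivCLM ℝ E (derivCLM ℝ E f))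
  have hintegrable_smul : Integrable fun x ↦ ‖w x • f x‖ ^ 2 := by
    simpa only [smulLeftCLM_apply hw] using hintegrable (smulLeftCLM E w f)
  have hintegrable_inner : Integrable fun x ↦ w x * ⟪f x, deriv (deriv f) x⟫ :=
    integrable_mul_inner_schwartzMap hw f (derivCLM ℝ E (derivCLM ℝ E f))
  simp only [hexpand]
  rw [integral_sub (hintegrable_deriv.fun_add hintegrable_smul) (hintegrable_inner.const_mul 2),
    integral_add hintegrable_deriv hintegrable_smul, integral_const_mul,
    two_mul_integral_mul_inner_deriv_deriv_self hw f]
  ring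

end Weighted

lemma deriv_deriv_const_mul_sq {𝕜 : Type*} [NontriviallyNormedField 𝕜] (c x : 𝕜) :
    deriv (deriv fun y : 𝕜 ↦ c * y ^ 2) x = 2 * c := by
  have hderiv : deriv (fun y : 𝕜 ↦ c * y ^ 2) = fun y ↦ c * (2 * y) := by
    ext y
    simp
  simp [hderiv, mul_comm]

theorem stmt_1_general (B : ℝ) (f : 𝓢(ℝ, E)) :
    (eLpNorm (fun x : ℝ ↦ -(deriv (deriv f) x) + (B ^ 2 * x ^ 2) • f x) 2 volume).toReal ^ 2 =
      (eLpNorm (fun x : ℝ ↦ deriv (deriv f) x) 2 volume).toReal ^ 2 +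
        B ^ 4 * (eLpNorm (fun x : ℝ ↦ x ^ 2 • f x) 2 volume).toReal ^ 2 +
        2 * B ^ 2 * (eLpNorm (fun x : ℝ ↦ x • deriv f x) 2 volume).toReal ^ 2 -
        2 * B ^ 2 * (eLpNorm (fun x : ℝ ↦ f x) 2 volume).toReal ^ 2 := by
  have hf : Continuous f := f.continuous
  have hf' : Continuous (deriv f) := (derivCLM ℝ E f).continuous
  have hf'' : Continuous (deriv (deriv f)) := (derivCLM ℝ E (derivCLM ℝ E f)).continuous
  have hV : (fun x : ℝ ↦ B ^ 2 * x ^ 2).HasTemperateGrowth := by fun_prop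
  have hsmul (x : ℝ) : ‖(B ^ 2 * x ^ 2) • f x‖ ^ 2 = B ^ 4 * ‖x ^ 2 • f x‖ ^ 2 := by
    simp only [norm_smul, Real.norm_eq_abs, mul_pow, sq_abs]
    ring
  have hsmul_deriv (x : ℝ) : B ^ 2 * x ^ 2 * ‖deriv f x‖ ^ 2 = B ^ 2 * ‖x • deriv f x‖ ^ 2 := by
    simp only [norm_smul, Real.norm_eq_abs, mul_pow, sq_abs, mul_assoc]
  rw [toReal_eLpNorm_two_sq (by fun_prop), toReal_eLpNorm_two_sq (by fun_prop),
    toReal_eLpNorm_two_sq (by fun_prop), toReal_eLpNorm_two_sq (by fun_prop),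
    toReal_eLpNorm_two_sq (by fun_prop), integral_norm_neg_deriv_deriv_add_smul_sq hV f]
  simp only [hsmul, hsmul_deriv, deriv_deriv_const_mul_sq, integral_const_mul]
  ring

/-- For every real B and every complex-valued Schwartz function f on ℝ,
‖−f'' + B²x²f‖² = ‖f''‖² + B⁴‖x²f‖² + 2B²‖x f'‖² − 2B²‖f‖². -/
theorem stmt_1 (B : ℝ) (f : SchwartzMap ℝ ℂ) :
    (eLpNorm (fun x : ℝ =>
        -(deriv (deriv f) x) + ((B ^ 2 * x ^ 2 : ℝ) : ℂ) * f x) 2 volume).toReal ^ 2 =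
      (eLpNorm (fun x : ℝ => deriv (deriv f) x) 2 volume).toReal ^ 2 +
        B ^ 4 * (eLpNorm (fun x : ℝ => ((x ^ 2 : ℝ) : ℂ) * f x) 2 volume).toReal ^ 2 +
        2 * B ^ 2 * (eLpNorm (fun x : ℝ => (x : ℂ) * deriv f x) 2 volume).toReal ^ 2 -
        2 * B ^ 2 * (eLpNorm (fun x : ℝ => f x) 2 volume).toReal ^ 2 := by
  simpa only [Complex.real_smul] using stmt_1_general B f
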